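/- Let Σ be a compact metric space and φ : Σ → Σ a homeomorphism. Let Λ ⊊ Σ be a proper closed invariant set (φ(Λ) = Λ) which is not locally maximal, meaning: for every open set U ⊇ Λ there exists a compact invariant set Λ' ⊆ U with Λ' ⊄ Λ. Then the complement Σ \ Λ is not minimal: there exists a point z ∈ Σ \ Λ whose full orbit {φⁿ(z) : n ∈ ℤ} is not dense in Σ \ Λ. -/

import Mathlib

/-- If `Λ` is a proper closed invariant set of a homeomorphism `φ` of a compact metric space
and `Λ` is not locally maximal, then the complement of `Λ` is not minimal: some point of the
complement has non-dense full orbit `{φⁿ z : n ∈ ℤ}` in the complement. -/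
theorem not_locallyMaximal_implies_complement_not_minimal_map
    {X : Type*} [MetricSpace X] [CompactSpace X]
    (φ : X ≃ₜ X)
    (Λ : Set X) (hclosed : IsClosed Λ) (hproper : Λ ≠ Set.univ)
    (hinv : φ '' Λ = Λ)
    (hnotmax : ∀ U : Set X, IsOpen U → Λ ⊆ U →
      ∃ Λ' : Set X, IsCompact Λ' ∧ φ '' Λ' = Λ' ∧ Λ' ⊆ U ∧ ¬ Λ' ⊆ Λ) :
    ∃ z ∈ Λᶜ, ¬ (Λᶜ ⊆ closure {y | ∃ n : ℤ, (φ.toEquiv ^ n) z = y}) := by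
  obtain ⟨p, hp⟩ := (Set.ne_univ_iff_exists_notMem Λ).1 hproper
  obtain ⟨Λ', hcompact, hinv', hsub, hnot⟩ :=
    hnotmax {p}ᶜ isOpen_compl_singleton (Set.subset_compl_singleton_iff.2 hp)
  obtain ⟨z, hz, hzΛ⟩ := Set.not_subset.1 hnot
  refine ⟨z, hzΛ, fun hdense => ?_⟩
  have hbij : Set.BijOn φ.toEquiv Λ' Λ' :=
    ⟨Set.mapsTo_iff_image_subset.2 hinv'.subset, φ.injective.injOn, hinv'.superset⟩
  have horbit : {y | ∃ n : ℤ, (φ.toEquiv ^ n) z = y} ⊆ Λ' := by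
    rintro _ ⟨n, rfl⟩
    exact (hbij.perm_zpow n).mapsTo hz
  exact hsub (closure_minimal horbit hcompact.isClosed (hdense hp)) rfl
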